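/- arXiv:math/9806034 — 6 statements merged into one kernel-verified Lean document; each statement's English description precedes it below -/
import Mathlib

section
/- Let l > 0 and let g : ℝ → ℝ be continuously differentiable, 2l-periodic, and have zero mean over I = (-l, l) (i.e. ∫_{-l}^{l} g(x) dx = 0). Then ‖g‖_∞² ≤ 2 ‖g‖ ‖g'‖, i.e. for every x ∈ ℝ, g(x)² ≤ 2 (∫_{-l}^{l} g(ξ)² dξ)^{1/2} (∫_{-l}^{l} g'(ξ)² dξ)^{1/2} (the Agmon inequality for periodic mean-zero functions). -/
/-- **Agmon inequality** for periodic mean-zero functions: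
if `g : ℝ → ℝ` is `C¹`, `2l`-periodic and has zero mean over `I = (-l, l)`, then
`‖g‖_∞² ≤ 2 ‖g‖ ‖g'‖`, i.e. for every `x`,
`g(x)² ≤ 2 (∫_I g²)^{1/2} (∫_I g'²)^{1/2}`. -/
theorem agmon_inequality_periodic_mean_zero
    (l : ℝ) (hl : 0 < l) (g : ℝ → ℝ) (hg : ContDiff ℝ 1 g)
    (hper : ∀ x : ℝ, g (x + 2 * l) = g x)
    (hmean : ∫ x in (-l)..l, g x = 0) :
    ∀ x : ℝ, (g x) ^ 2 ≤
      2 * Real.sqrt (∫ x in (-l)..l, (g x) ^ 2) *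
        Real.sqrt (∫ x in (-l)..l, (deriv g x) ^ 2) := by
  intro x
  have hgc : Continuous g := hg.continuous
  have hdc : Continuous (deriv g) := hg.continuous_deriv le_rfl
  have hd : ∀ y, HasDerivAt g (deriv g y) y := fun y =>
    ((hg.differentiable one_ne_zero) y).hasDerivAt
  obtain ⟨x₀, hx₀, hz⟩ : ∃ c ∈ Set.Ioo (-l) l, g c = 0 := by
    have hG : ∀ y, HasDerivAt (fun u => ∫ t in (-l)..u, g t) (g y) y := fun y =>
      hgc.integral_hasStrictDerivAt (-l) y |>.hasDerivAt
    refine exists_hasDerivAt_eq_zero (f := fun u => ∫ t in (-l)..u, g t) (by linarith)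
      (fun y _ => (hG y).continuousAt.continuousWithinAt) ?_ (fun y _ => hG y)
    simp [hmean]
  obtain ⟨y, hy, hxy⟩ : ∃ y ∈ Set.Ico (-l) (-l + 2 * l), g x = g y :=
    Function.Periodic.exists_mem_Ico (f := g) (c := 2 * l) hper (by linarith) x (-l)
  rw [hxy]
  set A := ∫ x in (-l)..l, (g x) ^ 2
  set B := ∫ x in (-l)..l, (deriv g x) ^ 2
  set C := ∫ x in (-l)..l, |g x * deriv g x| with hC
  have hA : 0 ≤ A := intervalIntegral.integral_nonneg (by linarith) fun _ _ => sq_nonneg _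
  have hCS : C ^ 2 ≤ A * B := by
    have h : ∀ t : ℝ, 0 ≤ A * (t * t) + (2 * C) * t + B := by
      intro t
      have h1 : 0 ≤ ∫ x in (-l)..l, (|g x| * t + |deriv g x|) ^ 2 :=
        intervalIntegral.integral_nonneg (by linarith) fun _ _ => sq_nonneg _
      have h2 : ∫ x in (-l)..l, (|g x| * t + |deriv g x|) ^ 2
          = A * (t * t) + C * (2 * t) + B := by
        rw [← intervalIntegral.integral_mul_const, ← intervalIntegral.integral_mul_const,
          ← intervalIntegral.integral_add, ← intervalIntegral.integral_add]
        · congr 1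
          ext u
          rw [abs_mul, ← sq_abs (g u), ← sq_abs (deriv g u)]
          ring
        all_goals exact Continuous.intervalIntegrable (by fun_prop) _ _
      linarith
    have := discrim_le_zero h
    unfold discrim at this
    linarith
  have hFTC : ∫ t in x₀..y, g t * deriv g t = g y ^ 2 / 2 := by
    rw [intervalIntegral.integral_eq_sub_of_hasDerivAt (f := fun t => g t ^ 2 / 2)]
    · simp [hz]
    · intro t _
      have h3 := ((hd t).fun_pow 2).div_const 2
      have h4 : ((2 : ℕ) : ℝ) * g t ^ (2 - 1) * deriv g t / 2 = g t * deriv g t := by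
        norm_num
        ring
      rw [h4] at h3
      exact h3
    · exact Continuous.intervalIntegrable (by fun_prop) _ _
  have hle : g y ^ 2 / 2 ≤ C := by
    have hsub : Set.uIoc x₀ y ⊆ Set.uIoc (-l) l := by
      rw [Set.uIoc_of_le (by linarith : -l ≤ l)]
      exact Set.Ioc_subset_Ioc (le_min hx₀.1.le hy.1) (max_le hx₀.2.le (by linarith [hy.2]))
    have h0 : 0 ≤ C := intervalIntegral.integral_nonneg (by linarith) fun _ _ => abs_nonneg _
    rw [← hFTC, ← abs_of_nonneg h0]
    refine (le_abs_self _).trans ((intervalIntegral.norm_integral_le_abs_integral_norm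
      (f := fun t => g t * deriv g t)).trans ?_)
    refine intervalIntegral.abs_integral_mono_interval hsub
      (Filter.Eventually.of_forall fun _ => norm_nonneg _) ?_
    exact Continuous.intervalIntegrable (by fun_prop) _ _
  have := Real.le_sqrt_of_sq_le hCS
  rw [Real.sqrt_mul hA] at this
  linarith
end

section
/- Let l > 0 and let g : ℝ → ℝ be continuously differentiable, 2l-periodic, and have zero mean over I = (-l, l). Then ∫_{-l}^{l} g(x)² dx ≤ (2l)² ∫_{-l}^{l} g'(x)² dx (the Poincaré inequality for periodic mean-zero functions). -/
theorem poincare_aux_diff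
    (l : ℝ) (hl : 0 < l) (g : ℝ → ℝ) (hg : ContDiff ℝ 1 g)
    (a b : ℝ) (ha : -l ≤ a) (hab : a ≤ b) (hb : b ≤ l) :
    (g b - g a) ^ 2 ≤ (2 * l) * ∫ x in (-l)..l, (deriv g x) ^ 2 := by
  have hc : Continuous (deriv g) := hg.continuous_deriv le_rfl
  have hd : ∀ x, HasDerivAt g (deriv g x) x := fun x =>
    (hg.differentiable one_ne_zero x).hasDerivAt
  have h1 : ∫ x in a..b, deriv g x = g b - g a :=
    intervalIntegral.integral_eq_sub_of_hasDerivAt (fun x _ => hd x) (hc.intervalIntegrable _ _)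
  have h2 : ∫ x in a..b, (deriv g x) ^ 2 ≤ ∫ x in (-l)..l, (deriv g x) ^ 2 :=
    intervalIntegral.integral_mono_interval ha hab hb
      (Filter.Eventually.of_forall fun x => sq_nonneg _) ((hc.pow 2).intervalIntegrable _ _)
  set D := ∫ x in (-l)..l, (deriv g x) ^ 2
  set t := (g b - g a) / (2 * l) with ht
  have h3 : 0 ≤ ∫ x in a..b, (deriv g x - t) ^ 2 :=
    intervalIntegral.integral_nonneg hab fun x _ => sq_nonneg _
  have h4 : ∫ x in a..b, (deriv g x - t) ^ 2
      = (∫ x in a..b, (deriv g x) ^ 2) - 2 * t * (g b - g a) + t ^ 2 * (b - a) := by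
    have : ∀ x, (deriv g x - t) ^ 2 = (deriv g x) ^ 2 - (2 * t) * deriv g x + t ^ 2 := by
      intro x; ring
    simp_rw [this]
    rw [intervalIntegral.integral_add, intervalIntegral.integral_sub,
      intervalIntegral.integral_const_mul, h1, intervalIntegral.integral_const, smul_eq_mul]
    · ring
    all_goals exact Continuous.intervalIntegrable (by fun_prop) _ _
  have h5 : g b - g a = t * (2 * l) := by rw [ht]; field_simp
  have h6 : t ^ 2 * (b - a) ≤ t ^ 2 * (2 * l) :=
    mul_le_mul_of_nonneg_left (by linarith) (sq_nonneg t)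
  rw [h5] at h4 ⊢
  have h7 : t ^ 2 * (2 * l) ≤ D := by nlinarith
  nlinarith

/-- **Poincaré inequality** for periodic mean-zero functions:
if `g : ℝ → ℝ` is `C¹`, `2l`-periodic and has zero mean over `I = (-l, l)`, then
`∫_I g² ≤ (2l)² ∫_I g'²`. -/
theorem poincare_inequality_periodic_mean_zero
    (l : ℝ) (hl : 0 < l) (g : ℝ → ℝ) (hg : ContDiff ℝ 1 g)
    (hper : ∀ x : ℝ, g (x + 2 * l) = g x)
    (hmean : ∫ x in (-l)..l, g x = 0) :
    (∫ x in (-l)..l, (g x) ^ 2) ≤ (2 * l) ^ 2 * ∫ x in (-l)..l, (deriv g x) ^ 2 := by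
  have hc : Continuous g := hg.continuous
  have hG : ∀ x, HasDerivAt (fun u => ∫ y in (-l)..u, g y) (g x) x := fun x =>
    intervalIntegral.integral_hasDerivAt_right (hc.intervalIntegrable _ _)
      (hc.stronglyMeasurableAtFilter _ _) hc.continuousAt
  obtain ⟨c, hcI, hc0⟩ := exists_hasDerivAt_eq_zero (f := fun u => ∫ y in (-l)..u, g y)
    (f' := g) (a := -l) (b := l) (by linarith)
    (fun x _ => (hG x).continuousAt.continuousWithinAt) (by simp [hmean]) (fun x _ => hG x)
  have key : ∀ x ∈ Set.Icc (-l) l, g x ^ 2 ≤ (2 * l) * ∫ x in (-l)..l, (deriv g x) ^ 2 := by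
    intro x hx
    rcases le_total c x with h | h
    · have := poincare_aux_diff l hl g hg c x hcI.1.le h hx.2
      simpa [hc0] using this
    · have := poincare_aux_diff l hl g hg x c hx.1 h hcI.2.le
      simpa [hc0] using this
  have hfin := intervalIntegral.integral_mono_on (μ := MeasureTheory.volume) (show -l ≤ l by linarith)
    ((hc.pow 2).intervalIntegrable _ _) intervalIntegrable_const key
  rw [intervalIntegral.integral_const, smul_eq_mul] at hfin
  simp only [Pi.pow_apply] at hfin
  linarith
end

section
/- Let l > 0 and let u, v : ℝ → ℝ be twice continuously differentiable and 2l-periodic, and set w := u - v. Then ∫_{-l}^{l} (u w' + w v') w dx ≤ ( (1/2) ‖u'‖^{1/2} ‖u''‖^{1/2} + ‖v'‖^{1/2} ‖v''‖^{1/2} ) ‖w‖². -/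
open intervalIntegral in
theorem cs_aux (a b : ℝ) (hab : a ≤ b) (g h : ℝ → ℝ) (hg : Continuous g) (hh : Continuous h) :
    (∫ x in a..b, |g x * h x|) ≤ Real.sqrt (∫ x in a..b, (g x)^2) * Real.sqrt (∫ x in a..b, (h x)^2) := by
  have hA : 0 ≤ ∫ x in a..b, (g x)^2 := integral_nonneg hab (fun x _ => sq_nonneg _)
  rw [← Real.sqrt_mul hA]
  apply Real.le_sqrt_of_sq_le
  have key : ∀ t : ℝ, 0 ≤ (∫ x in a..b, (g x)^2) * (t * t) + (2 * ∫ x in a..b, |g x * h x|) * t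
      + ∫ x in a..b, (h x)^2 := by
    intro t
    have h1 : 0 ≤ ∫ x in a..b, (|g x| * t + |h x|)^2 := integral_nonneg hab (fun x _ => sq_nonneg _)
    have h2 : (∫ x in a..b, (|g x| * t + |h x|)^2)
        = ∫ x in a..b, ((g x)^2 * (t * t) + |g x * h x| * (2 * t) + (h x)^2) := by
      congr 1; funext x
      rw [abs_mul, ← sq_abs (g x), ← sq_abs (h x)]; ring
    rw [h2, integral_add, integral_add, integral_mul_const, integral_mul_const] at h1
    · linarith
    all_goals exact Continuous.intervalIntegrable (by fun_prop) _ _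
  have := discrim_le_zero key
  unfold discrim at this
  nlinarith

open intervalIntegral in
theorem agmon_aux (l : ℝ) (hl : 0 < l) (f : ℝ → ℝ) (hf : ContDiff ℝ 2 f)
    (hp : ∀ x : ℝ, f (x + 2 * l) = f x) (x : ℝ) :
    |deriv f x| ≤ Real.sqrt (Real.sqrt (∫ x in (-l)..l, (deriv f x) ^ 2)) *
            Real.sqrt (Real.sqrt (∫ x in (-l)..l, (deriv (deriv f) x) ^ 2)) := by
  have hd : ContDiff ℝ 1 (deriv f) := by
    have : ContDiff ℝ (1+1) f := by simpa [one_add_one_eq_two] using hf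
    exact (contDiff_succ_iff_deriv.1 this).2.2
  have hg : Continuous (deriv f) := hd.continuous
  have hg' : Continuous (deriv (deriv f)) := hd.continuous_deriv le_rfl
  have hgd : Differentiable ℝ (deriv f) := hd.differentiable (by norm_num)
  have per : ∀ F : ℝ → ℝ, (∀ x, F (x + 2*l) = F x) → ∀ x, deriv F (x + 2*l) = deriv F x := by
    intro F hF x
    rw [← deriv_comp_add_const]
    congr 1; funext y; exact hF y
  have p1 := per f hp
  have p2 := per _ p1
  obtain ⟨c, hc, hc0⟩ := exists_deriv_eq_zero (f := f) (a := x) (b := x + 2*l) (by linarith)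
    hf.continuous.continuousOn (hp x).symm
  have ftc : ∀ a b : ℝ, ∫ y in a..b, 2 * (deriv f y * deriv (deriv f) y)
      = (deriv f b)^2 - (deriv f a)^2 := by
    intro a b
    apply integral_eq_sub_of_hasDerivAt
    · intro y _
      have := (hgd y).hasDerivAt.pow 2
      refine HasDerivAt.congr_deriv this ?_
      simp; ring
    · exact Continuous.intervalIntegrable (by fun_prop) _ _
  have bd : ∀ a b : ℝ, a ≤ b → |(deriv f b)^2 - (deriv f a)^2| ≤
      2 * ∫ y in a..b, |deriv f y * deriv (deriv f) y| := by
    intro a b hab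
    rw [← ftc, integral_const_mul, abs_mul, abs_two]
    have := abs_integral_le_integral_abs (f := fun y => deriv f y * deriv (deriv f) y)
      (μ := MeasureTheory.volume) hab
    linarith
  have b1 := bd x c hc.1.le
  have b2 := bd c (x+2*l) hc.2.le
  rw [hc0] at b1 b2
  rw [p1] at b2
  have hsum : (∫ y in x..c, |deriv f y * deriv (deriv f) y|) +
      (∫ y in c..(x+2*l), |deriv f y * deriv (deriv f) y|)
      = ∫ y in x..(x+2*l), |deriv f y * deriv (deriv f) y| :=
    integral_add_adjacent_intervals (Continuous.intervalIntegrable (by fun_prop) _ _)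
      (Continuous.intervalIntegrable (by fun_prop) _ _)
  have hper : Function.Periodic (fun y => |deriv f y * deriv (deriv f) y|) (2*l) := by
    intro y; simp only [p1, p2]
  have e := hper.intervalIntegral_add_eq x (-l)
  rw [show -l + 2*l = l by ring] at e
  have cs := cs_aux (-l) l (by linarith) _ _ hg hg'
  have c1 := neg_le_of_abs_le b1
  have c2 := le_of_abs_le b2
  rw [← Real.sqrt_mul (Real.sqrt_nonneg _)]
  apply Real.abs_le_sqrt
  nlinarith

/-- For `C²`, `2l`-periodic functions `u, v` and `w := u - v`,
`∫_I (u w' + w v') w dx ≤ ((1/2) ‖u'‖^{1/2} ‖u''‖^{1/2} + ‖v'‖^{1/2} ‖v''‖^{1/2}) ‖w‖²`,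
where `‖·‖` is the `L²` norm on `I = (-l, l)`. -/
theorem nonlinear_term_estimate
    (l : ℝ) (hl : 0 < l) (u v : ℝ → ℝ)
    (hu : ContDiff ℝ 2 u) (hv : ContDiff ℝ 2 v)
    (hup : ∀ x : ℝ, u (x + 2 * l) = u x)
    (hvp : ∀ x : ℝ, v (x + 2 * l) = v x) :
    (∫ x in (-l)..l,
        (u x * deriv (fun y => u y - v y) x + (u x - v x) * deriv v x) * (u x - v x))
      ≤ ((1 / 2) * Real.sqrt (Real.sqrt (∫ x in (-l)..l, (deriv u x) ^ 2)) *
            Real.sqrt (Real.sqrt (∫ x in (-l)..l, (deriv (deriv u) x) ^ 2))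
          + Real.sqrt (Real.sqrt (∫ x in (-l)..l, (deriv v x) ^ 2)) *
            Real.sqrt (Real.sqrt (∫ x in (-l)..l, (deriv (deriv v) x) ^ 2)))
        * ∫ x in (-l)..l, (u x - v x) ^ 2 := by
  have hu1 : Differentiable ℝ u := hu.differentiable (by norm_num)
  have hv1 : Differentiable ℝ v := hv.differentiable (by norm_num)
  have cu : Continuous u := hu.continuous
  have cv : Continuous v := hv.continuous
  have cu' : Continuous (deriv u) := hu.continuous_deriv (by norm_num)
  have cv' : Continuous (deriv v) := hv.continuous_deriv (by norm_num)
  have hdw : ∀ x, deriv (fun y => u y - v y) x = deriv u x - deriv v x := by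
    intro x
    exact deriv_fun_sub (hu1 x) (hv1 x)
  have au := agmon_aux l hl u hu hup
  have av := agmon_aux l hl v hv hvp
  rw [mul_assoc (1/2 : ℝ)]
  generalize Real.sqrt (Real.sqrt (∫ x in (-l)..l, (deriv u x) ^ 2)) *
            Real.sqrt (Real.sqrt (∫ x in (-l)..l, (deriv (deriv u) x) ^ 2)) = M at au ⊢
  generalize Real.sqrt (Real.sqrt (∫ x in (-l)..l, (deriv v x) ^ 2)) *
            Real.sqrt (Real.sqrt (∫ x in (-l)..l, (deriv (deriv v) x) ^ 2)) = N at av ⊢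
  simp only [hdw]
  have hz : ∫ x in (-l)..l, (deriv u x * (u x - v x)^2
      + u x * (2 * (u x - v x) * (deriv u x - deriv v x))) = 0 := by
    rw [intervalIntegral.integral_eq_sub_of_hasDerivAt (f := fun x => u x * (u x - v x)^2)]
    · have h1 := hup (-l)
      have h2 := hvp (-l)
      rw [show -l + 2*l = l by ring] at h1 h2
      simp [h1, h2]
    · intro x _
      have := (hu1 x).hasDerivAt.mul (((hu1 x).hasDerivAt.sub (hv1 x).hasDerivAt).pow 2)
      refine HasDerivAt.congr_deriv this ?_
      simp
    · exact Continuous.intervalIntegrable (by fun_prop) _ _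
  have hid : (∫ x in (-l)..l,
        (u x * (deriv u x - deriv v x) + (u x - v x) * deriv v x) * (u x - v x))
      = ∫ x in (-l)..l, (-(1/2) * deriv u x + deriv v x) * (u x - v x)^2 := by
    rw [← sub_eq_zero, ← intervalIntegral.integral_sub]
    · rw [← mul_zero (1/2 : ℝ), ← hz, ← intervalIntegral.integral_const_mul]
      congr 1; funext x; ring
    all_goals exact Continuous.intervalIntegrable (by fun_prop) _ _
  rw [hid, ← intervalIntegral.integral_const_mul]
  apply intervalIntegral.integral_mono_on (by linarith)
  · exact Continuous.intervalIntegrable (by fun_prop) _ _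
  · exact Continuous.intervalIntegrable (by fun_prop) _ _
  · intro x _
    apply mul_le_mul_of_nonneg_right _ (sq_nonneg _)
    have h1 := neg_le_of_abs_le (au x)
    have h2 := le_of_abs_le (av x)
    linarith
end

section
/- Let l > 0, ρ₁, ρ₂ ≥ 0, and let u, v : ℝ → ℝ be twice continuously differentiable and 2l-periodic with ‖u'‖ ≤ ρ₁, ‖v'‖ ≤ ρ₁, ‖u''‖ ≤ ρ₂, ‖v''‖ ≤ ρ₂. Then with w := u - v, ∫_{-l}^{l} (u w' + w v') w dx ≤ 2 ρ₁^{1/2} ρ₂^{1/2} ‖w‖². -/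
open intervalIntegral

theorem aux_cs (a b : ℝ) (hab : a ≤ b) (g h : ℝ → ℝ) (hg : Continuous g) (hh : Continuous h) :
    (∫ x in a..b, |g x * h x|) ^ 2 ≤ (∫ x in a..b, g x ^ 2) * ∫ x in a..b, h x ^ 2 := by
  have key : ∀ t : ℝ, 0 ≤ (∫ x in a..b, g x ^ 2) * (t * t)
      + (-2 * ∫ x in a..b, |g x * h x|) * t + ∫ x in a..b, h x ^ 2 := by
    intro t
    have e : (∫ x in a..b, (t * |g x| - |h x|) ^ 2) = (∫ x in a..b, g x ^ 2) * (t * t)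
      + (-2 * ∫ x in a..b, |g x * h x|) * t + ∫ x in a..b, h x ^ 2 := by
      have : ∀ x, (t * |g x| - |h x|) ^ 2
          = (t * t) * g x ^ 2 + (-2 * t) * |g x * h x| + h x ^ 2 := by
        intro x
        rw [abs_mul, ← sq_abs (g x), ← sq_abs (h x)]; ring
      simp_rw [this]
      rw [integral_add, integral_add, integral_const_mul, integral_const_mul]
      · ring
      all_goals exact Continuous.intervalIntegrable (by fun_prop) _ _
    rw [← e]
    exact integral_nonneg hab (fun x _ => sq_nonneg _)
  have := discrim_le_zero key
  unfold discrim at this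
  nlinarith

theorem aux_sup (l ρ₁ ρ₂ : ℝ) (hl : 0 < l) (hρ₁ : 0 ≤ ρ₁) (hρ₂ : 0 ≤ ρ₂)
    (u : ℝ → ℝ) (hu : ContDiff ℝ 2 u)
    (hup : ∀ x : ℝ, u (x + 2 * l) = u x)
    (hu1 : Real.sqrt (∫ x in (-l)..l, (deriv u x) ^ 2) ≤ ρ₁)
    (hu2 : Real.sqrt (∫ x in (-l)..l, (deriv (deriv u) x) ^ 2) ≤ ρ₂)
    (x : ℝ) (hx : x ∈ Set.Icc (-l) l) : |deriv u x| ≤ Real.sqrt ρ₁ * Real.sqrt ρ₂ := by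
  have hd : ContDiff ℝ 1 (deriv u) := by
    have : ContDiff ℝ (1 + 1) u := by simpa [one_add_one_eq_two] using hu
    exact (contDiff_succ_iff_deriv.1 this).2.2
  have hgc : Continuous (deriv u) := hd.continuous
  have hgd : Differentiable ℝ (deriv u) := hd.differentiable (by norm_num)
  have hhc : Continuous (deriv (deriv u)) := hd.continuous_deriv (by norm_num)
  have hgp : ∀ x, deriv u (x + 2 * l) = deriv u x := by
    intro x
    rw [← deriv_comp_add_const]
    congr 1
    funext y; exact hup y
  have hhp : ∀ x, deriv (deriv u) (x + 2 * l) = deriv (deriv u) x := by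
    intro x
    rw [← deriv_comp_add_const]
    congr 1
    funext y; exact hgp y
  obtain ⟨c, hc, hc0⟩ := exists_deriv_eq_zero (f := u) (a := -l) (b := l) (by linarith)
    hu.continuous.continuousOn (by rw [← hup (-l)]; congr 1; ring)
  generalize deriv u = g at *
  set C := ∫ x in (-l)..l, |g x * deriv g x| with hC
  have hCc : (∫ x in c..(c + 2 * l), |g x * deriv g x|) = C := by
    have hp : Function.Periodic (fun x => |g x * deriv g x|) (2 * l) := by
      intro x; simp only [hgp, hhp]
    rw [hp.intervalIntegral_add_eq c (-l), hC]
    congr 1; ring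
  have ftc : ∀ a b, (∫ x in a..b, g x * deriv g x) = g b ^ 2 / 2 - g a ^ 2 / 2 := by
    intro a b
    refine integral_eq_sub_of_hasDerivAt (f := fun y => g y ^ 2 / 2) (fun y _ => ?_) ((hgc.mul hhc).intervalIntegrable _ _)
    have := ((hgd y).hasDerivAt.pow 2).div_const 2
    refine HasDerivAt.congr_deriv this ?_
    simp [Pi.pow_apply, Pi.sub_apply]; try ring
  have hint : ∀ a b, IntervalIntegrable (fun x => |g x * deriv g x|) MeasureTheory.volume a b :=
    fun a b => (hgc.mul hhc).abs.intervalIntegrable _ _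
  have main : ∀ y ∈ Set.Icc c (c + 2 * l), g y ^ 2 ≤ C := by
    intro y hy
    have h1 := abs_integral_le_integral_abs (μ := MeasureTheory.volume) (f := fun x => g x * deriv g x) hy.1
    have h2 := abs_integral_le_integral_abs (μ := MeasureTheory.volume) (f := fun x => g x * deriv g x) hy.2
    rw [ftc] at h1 h2
    rw [hgp, hc0] at h2
    rw [hc0] at h1
    have h3 := integral_add_adjacent_intervals (hint c y) (hint y (c + 2 * l))
    rw [hCc] at h3
    have := le_abs_self (g y ^ 2 / 2 - 0 ^ 2 / 2)
    have := neg_abs_le (0 ^ 2 / 2 - g y ^ 2 / 2)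
    linarith
  have hgx : g x ^ 2 ≤ C := by
    rcases le_or_gt c x with h | h
    · exact main x ⟨h, by linarith [hx.2, hc.1]⟩
    · rw [← hgp]
      exact main _ ⟨by linarith [hx.1, hc.2], by linarith⟩
  have hcs := aux_cs (-l) l (by linarith) g (deriv g) hgc hhc
  have hA := (Real.sqrt_le_left hρ₁).1 hu1
  have hB := (Real.sqrt_le_left hρ₂).1 hu2
  have hA0 : 0 ≤ ∫ x in (-l)..l, g x ^ 2 := integral_nonneg (by linarith) (fun x _ => sq_nonneg _)
  have hB0 : 0 ≤ ∫ x in (-l)..l, deriv g x ^ 2 :=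
    integral_nonneg (by linarith) (fun x _ => sq_nonneg _)
  have hCle : C ≤ ρ₁ * ρ₂ := by
    refine abs_le_of_sq_le_sq' ?_ (by positivity) |>.2
    calc C ^ 2 ≤ _ := hcs
      _ ≤ ρ₁ ^ 2 * ρ₂ ^ 2 := by gcongr
      _ = _ := by ring
  rw [← Real.sqrt_mul hρ₁]
  exact Real.abs_le_sqrt (hgx.trans hCle)

/-- For `C²`, `2l`-periodic functions `u, v` with `‖u'‖, ‖v'‖ ≤ ρ₁` and `‖u''‖, ‖v''‖ ≤ ρ₂`,
and `w := u - v`, one has `∫_I (u w' + w v') w dx ≤ 2 ρ₁^{1/2} ρ₂^{1/2} ‖w‖²`. -/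
theorem nonlinear_term_estimate_with_bounds
    (l ρ₁ ρ₂ : ℝ) (hl : 0 < l) (hρ₁ : 0 ≤ ρ₁) (hρ₂ : 0 ≤ ρ₂)
    (u v : ℝ → ℝ) (hu : ContDiff ℝ 2 u) (hv : ContDiff ℝ 2 v)
    (hup : ∀ x : ℝ, u (x + 2 * l) = u x)
    (hvp : ∀ x : ℝ, v (x + 2 * l) = v x)
    (hu1 : Real.sqrt (∫ x in (-l)..l, (deriv u x) ^ 2) ≤ ρ₁)
    (hv1 : Real.sqrt (∫ x in (-l)..l, (deriv v x) ^ 2) ≤ ρ₁)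
    (hu2 : Real.sqrt (∫ x in (-l)..l, (deriv (deriv u) x) ^ 2) ≤ ρ₂)
    (hv2 : Real.sqrt (∫ x in (-l)..l, (deriv (deriv v) x) ^ 2) ≤ ρ₂) :
    (∫ x in (-l)..l,
        (u x * deriv (fun y => u y - v y) x + (u x - v x) * deriv v x) * (u x - v x))
      ≤ 2 * Real.sqrt ρ₁ * Real.sqrt ρ₂ * ∫ x in (-l)..l, (u x - v x) ^ 2 := by
  have hud : Differentiable ℝ u := hu.differentiable (by norm_num)
  have hvd : Differentiable ℝ v := hv.differentiable (by norm_num)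
  have huc : Continuous u := hu.continuous
  have hvc : Continuous v := hv.continuous
  have hu'c : Continuous (deriv u) := hu.continuous_deriv (by norm_num)
  have hv'c : Continuous (deriv v) := hv.continuous_deriv (by norm_num)
  have hw : ∀ x, deriv (fun y => u y - v y) x = deriv u x - deriv v x :=
    fun x => deriv_fun_sub (hud x) (hvd x)
  simp_rw [hw]
  have e0 : (∫ x in (-l)..l, (deriv u x * (u x - v x) ^ 2 / 2
      + u x * (u x - v x) * (deriv u x - deriv v x))) = 0 := by
    rw [integral_eq_sub_of_hasDerivAt (f := fun y => u y * (u y - v y) ^ 2 / 2)]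
    · have h1 : u l = u (-l) := by rw [← hup (-l)]; congr 1; ring
      have h2 : v l = v (-l) := by rw [← hvp (-l)]; congr 1; ring
      simp only [h1, h2, sub_self]
    · intro y _
      have := ((hud y).hasDerivAt.mul
        (((hud y).hasDerivAt.sub (hvd y).hasDerivAt).pow 2)).div_const 2
      refine HasDerivAt.congr_deriv this ?_
      simp [Pi.pow_apply, Pi.sub_apply]; try ring
    · exact Continuous.intervalIntegrable (by fun_prop) _ _
  have e1 : (∫ x in (-l)..l,
        (u x * (deriv u x - deriv v x) + (u x - v x) * deriv v x) * (u x - v x))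
      = ∫ x in (-l)..l, (deriv v x - deriv u x / 2) * (u x - v x) ^ 2 := by
    rw [← sub_eq_zero, ← integral_sub, ← e0]
    · congr 1; funext x; ring
    all_goals exact Continuous.intervalIntegrable (by fun_prop) _ _
  rw [e1, ← intervalIntegral.integral_const_mul]
  apply integral_mono_on (by linarith)
  · exact Continuous.intervalIntegrable (by fun_prop) _ _
  · exact Continuous.intervalIntegrable (by fun_prop) _ _
  intro x hx
  have h1 := aux_sup l ρ₁ ρ₂ hl hρ₁ hρ₂ u hu hup hu1 hu2 x hx
  have h2 := aux_sup l ρ₁ ρ₂ hl hρ₁ hρ₂ v hv hvp hv1 hv2 x hx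
  have h3 := (abs_le.1 h1).1
  have h4 := (abs_le.1 h2).2
  have h5 : 0 ≤ Real.sqrt ρ₁ * Real.sqrt ρ₂ := by positivity
  apply mul_le_mul_of_nonneg_right _ (sq_nonneg _)
  linarith
end

section
/- Let l > 0, 0 ≤ α ≤ 1, ρ ≥ 0, and let w : ℝ → ℝ be three times continuously differentiable and 2l-periodic with ‖w'‖ ≤ ρ. Then α ∫_{-l}^{l} H(w''')(x) w(x) dx = -α ∫_{-l}^{l} H(w'')(x) w'(x) dx ≤ α² ρ² + (1/4) ‖w''‖², where H denotes the periodic Hilbert transform on 2l-periodic functions. -/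
theorem aux_congr {f g : ℤ → ℂ} {s : ℂ} (hf : HasSum f s) (h : ∀ k, g k = f k) : HasSum g s := by
  rw [funext h]; exact hf

open MeasureTheory Set intervalIntegral in
theorem aux_pointwise {a b : ℝ} (hab : a < b) (g : ℝ → ℂ) (hc : Continuous g) (hg : g a = g b)
    (hs : Summable (fourierCoeffOn hab g)) (x : ℝ) (hx : x ∈ Ioc a b) :
    HasSum (fun k : ℤ => fourierCoeffOn hab g k * fourier k (x : AddCircle (b - a))) (g x) := by
  have := Fact.mk (by linarith : 0 < b - a)
  have hcont : Continuous (AddCircle.liftIoc (b - a) a g) :=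
    AddCircle.liftIoc_continuous (by rw [hg]; congr 1; ring) hc.continuousOn
  have h := has_pointwise_sum_fourier_series_of_summable
    (f := (⟨_, hcont⟩ : C(AddCircle (b - a), ℂ))) hs (x : AddCircle (b - a))
  have e : AddCircle.liftIoc (b - a) a g (x : AddCircle (b - a)) = g x :=
    AddCircle.liftIoc_coe_apply (by simpa using hx)
  rw [← e]
  exact h

theorem aux_fourier_cont (T : ℝ) (k : ℤ) : Continuous (fun x : ℝ => fourier k (x : AddCircle T)) :=
  (map_continuous (fourier k)).comp (AddCircle.continuous_mk' _)

theorem aux_fourier_norm (T : ℝ) (k : ℤ) (x : AddCircle T) : ‖fourier k x‖ = 1 := by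
  rw [fourier_apply]; exact Circle.norm_coe _

open MeasureTheory Set intervalIntegral in
theorem aux_pair {a b : ℝ} (hab : a < b) (g h : ℝ → ℂ) (hc : Continuous g) (hg : g a = g b)
    (hs : Summable (fourierCoeffOn hab g)) (hh : IntervalIntegrable h volume a b) :
    HasSum (fun k : ℤ => fourierCoeffOn hab g k * (((b - a : ℝ) : ℂ) * fourierCoeffOn hab h (-k)))
      (∫ x in a..b, h x * g x) := by
  have hba : ((b - a : ℝ) : ℂ) ≠ 0 := by
    rw [Complex.ofReal_ne_zero]; linarith
  have key := intervalIntegral.hasSum_integral_of_dominated_convergence (μ := volume)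
    (a := a) (b := b) (ι := ℤ)
    (F := fun k x => fourierCoeffOn hab g k * (fourier k (x : AddCircle (b - a)) * h x))
    (f := fun x => h x * g x)
    (fun k x => ‖fourierCoeffOn hab g k‖ * ‖h x‖)
    (fun n => ?_) (fun n => ?_) ?_ ?_ ?_
  · refine aux_congr key fun k => ?_
    rw [fourierCoeffOn_eq_integral h, intervalIntegral.integral_const_mul, neg_neg]
    congr 1
    simp only [smul_eq_mul, Complex.real_smul]
    push_cast at hba ⊢
    field_simp
  · rw [uIoc_of_le hab.le]
    exact (((aux_fourier_cont _ n).aestronglyMeasurable).mul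
      hh.1.aestronglyMeasurable).const_mul _
  · refine Filter.Eventually.of_forall fun x _ => ?_
    rw [norm_mul, norm_mul, aux_fourier_norm, one_mul]
  · refine Filter.Eventually.of_forall fun x _ => ?_
    exact hs.norm.mul_right _
  · simp_rw [tsum_mul_right]
    exact hh.norm.const_mul _
  · refine Filter.Eventually.of_forall fun x hx => ?_
    rw [uIoc_of_le hab.le] at hx
    have := (aux_pointwise hab g hc hg hs x hx).mul_left (h x)
    refine aux_congr this fun k => ?_
    ring

open MeasureTheory Set in
theorem aux_nonint {a b : ℝ} (hab : a < b) (h : ℝ → ℂ) (hh : ¬ IntervalIntegrable h volume a b)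
    (k : ℤ) : fourierCoeffOn hab h k = 0 := by
  rw [fourierCoeffOn_eq_integral, intervalIntegral.integral_undef, smul_zero]
  intro hi
  apply hh
  have := hi.continuousOn_mul (aux_fourier_cont (b - a) k).continuousOn
  refine this.congr ?_
  refine fun x _ => ?_
  simp only [smul_eq_mul, ← mul_assoc, ← fourier_add]
  simp

open MeasureTheory Set in
theorem aux_deriv {a b : ℝ} (hab : a < b) (f f' : ℝ → ℂ) (hd : ∀ x, HasDerivAt f (f' x) x)
    (hc : Continuous f') (hf : f a = f b) (n : ℤ) :
    ((b - a : ℝ) : ℂ) * fourierCoeffOn hab f' n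
      = 2 * Real.pi * Complex.I * n * fourierCoeffOn hab f n := by
  rcases eq_or_ne n 0 with rfl | hn
  · rw [fourierCoeffOn_eq_integral]
    simp only [neg_zero, fourier_zero, one_smul, Int.cast_zero, mul_zero, zero_mul]
    rw [intervalIntegral.integral_eq_sub_of_hasDerivAt (fun x _ => hd x)
      (hc.intervalIntegrable _ _), hf]
    simp
  · have h := fourierCoeffOn_of_hasDerivAt hab hn (fun x _ => hd x) (hc.intervalIntegrable a b)
    have hn' : (n : ℂ) ≠ 0 := by exact_mod_cast hn
    have hpi : (Real.pi : ℂ) ≠ 0 := by exact_mod_cast Real.pi_ne_zero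
    have hI := Complex.I_ne_zero
    rw [h, hf]
    push_cast
    field_simp
    ring

open MeasureTheory Set in
theorem aux_parseval {a b : ℝ} (hab : a < b) (f : ℝ → ℝ) (hc : Continuous f) :
    HasSum (fun k : ℤ => (b - a) * ‖fourierCoeffOn hab (fun x => (f x : ℂ)) k‖ ^ 2)
      (∫ x in a..b, f x ^ 2) := by
  have hc' : Continuous (fun x => (f x : ℂ)) := by fun_prop
  have hm : MemLp (fun x => (f x : ℂ)) 2 (volume.restrict (Ioc a b)) := by
    obtain ⟨C, hC⟩ := (isCompact_Icc (a := a) (b := b)).exists_bound_of_continuousOn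
      hc'.continuousOn
    refine MemLp.of_bound hc'.aestronglyMeasurable C ?_
    exact (ae_restrict_iff' measurableSet_Ioc).2
      (Filter.Eventually.of_forall fun x hx => hC x (Ioc_subset_Icc_self hx))
  have h := (hasSum_sq_fourierCoeffOn hab hm).mul_left (b - a)
  have hba : b - a ≠ 0 := by linarith
  rw [smul_eq_mul, mul_inv_cancel_left₀ hba] at h
  simpa using h

open MeasureTheory Set in
theorem aux_summable {a b : ℝ} (hab : a < b) (f f' : ℝ → ℝ) (hd : ∀ x, HasDerivAt f (f' x) x)
    (hc : Continuous f') (hf : f a = f b) :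
    Summable (fourierCoeffOn hab (fun x => (f x : ℂ))) := by
  have hba : 0 < b - a := by linarith
  have h1 : Summable fun k : ℤ => ‖fourierCoeffOn hab (fun x => (f' x : ℂ)) k‖ ^ 2 := by
    have := (aux_parseval hab f' hc).summable.mul_left (b - a)⁻¹
    refine this.congr fun k => ?_
    field_simp
  have h2 : Summable fun k : ℤ => 1 / (k : ℝ) ^ 2 := Real.summable_one_div_int_pow.2 (by norm_num)
  have h3 := (h1.mul_left ((b - a) ^ 2)).add h2
  refine Summable.of_norm_bounded_eventually h3 ?_
  have : ∀ᶠ k : ℤ in Filter.cofinite, k ≠ 0 := (Set.finite_singleton (0:ℤ)).eventually_cofinite_notMem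
  filter_upwards [this] with k hk
  have h := aux_deriv hab (fun x => (f x : ℂ)) (fun x => (f' x : ℂ))
    (fun x => (hd x).ofReal_comp) (by fun_prop) (by simp [hf]) k
  have hn := congrArg norm h
  simp only [norm_mul, Complex.norm_real, Complex.norm_I, Complex.norm_intCast,
    Real.norm_eq_abs, abs_of_pos hba, abs_of_pos Real.pi_pos, Complex.norm_ofNat] at hn
  have hk' : 0 < |(k : ℝ)| := by positivity
  set A := ‖fourierCoeffOn hab (fun x => (f x : ℂ)) k‖
  set B := ‖fourierCoeffOn hab (fun x => (f' x : ℂ)) k‖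
  have hA : 0 ≤ A := norm_nonneg _
  rw [← sq_abs (k : ℝ)]
  set K := |(k : ℝ)|
  have hKA : K * A ≤ (b - a) * B := by
    rw [hn]
    have := Real.pi_gt_three
    have h0 : 0 ≤ K * A := by positivity
    nlinarith
  have hA2 : A ≤ (b - a) * B * (1 / K) := by
    rw [mul_one_div, le_div_iff₀ hk']; linarith
  have e : 1 / K ^ 2 = (1 / K) ^ 2 := by rw [div_pow, one_pow]
  rw [e]
  nlinarith [sq_nonneg ((b - a) * B - 1 / K), sq_nonneg ((b - a) * B), sq_nonneg (1 / K)]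

open MeasureTheory Set in
theorem aux_const {a b : ℝ} (hab : a < b) (f : ℝ → ℝ) (hc : Continuous f) (hf : f a = f b)
    (h0 : ∀ k : ℤ, k ≠ 0 → fourierCoeffOn hab (fun x => (f x : ℂ)) k = 0) :
    ∀ x ∈ Ioc a b, (f x : ℂ) = fourierCoeffOn hab (fun x => (f x : ℂ)) 0 := by
  intro x hx
  have hs : Summable (fourierCoeffOn hab (fun x => (f x : ℂ))) :=
    summable_of_ne_finset_zero (s := {0}) (fun k hk => h0 k (by simpa using hk))
  have h := aux_pointwise hab (fun x => (f x : ℂ)) (by fun_prop) (by simp [hf]) hs x hx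
  have h' := hasSum_single (f := fun k : ℤ => fourierCoeffOn hab (fun x => (f x : ℂ)) k *
    fourier k (x : AddCircle (b - a))) 0 (fun k hk => by simp [h0 k hk])
  have := h.unique h'
  simpa using this



/-- `Hf` is the periodic Hilbert transform of the `2l`-periodic function `f`: the `k`-th
Fourier coefficient of `Hf` on `(-l, l)` (w.r.t. the basis `e^{i k π x / l}`) equals
`i·sgn(k)` times that of `f`, where `sgn(0) = 0`. -/
def IsPeriodicHilbertPair (l : ℝ) (hl : 0 < l) (f Hf : ℝ → ℝ) : Prop :=
  ∀ k : ℤ, fourierCoeffOn (show (-l : ℝ) < l by linarith) (fun x => (Hf x : ℂ)) k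
    = Complex.I * (Int.sign k : ℂ) *
        fourierCoeffOn (show (-l : ℝ) < l by linarith) (fun x => (f x : ℂ)) k

/-- For `0 ≤ α ≤ 1` and a `C³`, `2l`-periodic function `w` with `‖w'‖ ≤ ρ`,
`α ∫_I H(w''') w dx = -α ∫_I H(w'') w' dx ≤ α² ρ² + (1/4) ‖w''‖²`,
where `H` is the periodic Hilbert transform and `‖·‖` the `L²` norm on `I = (-l, l)`. -/
theorem hilbert_term_estimate
    (l α ρ : ℝ) (hl : 0 < l) (hα0 : 0 ≤ α) (hα1 : α ≤ 1) (hρ : 0 ≤ ρ)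
    (w H3 H2 : ℝ → ℝ) (hw : ContDiff ℝ 3 w)
    (hper : ∀ x : ℝ, w (x + 2 * l) = w x)
    (hH3per : ∀ x : ℝ, H3 (x + 2 * l) = H3 x)
    (hH2per : ∀ x : ℝ, H2 (x + 2 * l) = H2 x)
    (hH3 : IsPeriodicHilbertPair l hl (iteratedDeriv 3 w) H3)
    (hH2 : IsPeriodicHilbertPair l hl (iteratedDeriv 2 w) H2)
    (hw1 : Real.sqrt (∫ x in (-l)..l, (deriv w x) ^ 2) ≤ ρ) :
    α * (∫ x in (-l)..l, H3 x * w x) = -(α * ∫ x in (-l)..l, H2 x * deriv w x) ∧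
    -(α * ∫ x in (-l)..l, H2 x * deriv w x)
      ≤ α ^ 2 * ρ ^ 2 + (1 / 4) * ∫ x in (-l)..l, (iteratedDeriv 2 w x) ^ 2 := by
  have hab : -l < l := by linarith
  have hba : (0 : ℝ) < l - (-l) := by linarith
  have hperi : ∀ f : ℝ → ℝ, (∀ x, f (x + 2 * l) = f x) → ∀ x, deriv f (x + 2 * l) = deriv f x := by
    intro f hf x
    have : (fun y => f (y + 2 * l)) = f := funext hf
    rw [← deriv_comp_add_const, this]
  have e1 : deriv w = iteratedDeriv 1 w := iteratedDeriv_one.symm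
  have p1 : ∀ x, iteratedDeriv 1 w (x + 2 * l) = iteratedDeriv 1 w x := by
    rw [← e1]; exact hperi w hper
  have p2 : ∀ x, iteratedDeriv 2 w (x + 2 * l) = iteratedDeriv 2 w x := by
    rw [iteratedDeriv_succ]; exact hperi _ p1
  have c0 : Continuous w := hw.continuous
  have c1 : Continuous (iteratedDeriv 1 w) := hw.continuous_iteratedDeriv 1 (by norm_num)
  have c2 : Continuous (iteratedDeriv 2 w) := hw.continuous_iteratedDeriv 2 (by norm_num)
  have c3 : Continuous (iteratedDeriv 3 w) := hw.continuous_iteratedDeriv 3 (by norm_num)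
  have d0 : ∀ x, HasDerivAt w (iteratedDeriv 1 w x) x := fun x => by
    rw [iteratedDeriv_one]
    exact ((hw.differentiable (by norm_num)) x).hasDerivAt
  have d1 : ∀ x, HasDerivAt (iteratedDeriv 1 w) (iteratedDeriv 2 w x) x := fun x => by
    rw [iteratedDeriv_succ (n := 1)]
    exact ((hw.differentiable_iteratedDeriv 1 (by norm_num)) x).hasDerivAt
  have d2 : ∀ x, HasDerivAt (iteratedDeriv 2 w) (iteratedDeriv 3 w x) x := fun x => by
    rw [iteratedDeriv_succ (n := 2)]
    exact ((hw.differentiable_iteratedDeriv 2 (by norm_num)) x).hasDerivAt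
  have endp : ∀ f : ℝ → ℝ, (∀ x, f (x + 2 * l) = f x) → f (-l) = f l := by
    intro f hf
    rw [← hf (-l)]; congr 1; ring
  have b0 := endp _ hper
  have b1 := endp _ p1
  have b2 := endp _ p2
  rw [e1] at hw1 ⊢
  unfold IsPeriodicHilbertPair at hH3 hH2
  have r0 := aux_deriv hab (fun x => (w x : ℂ)) (fun x => ((iteratedDeriv 1 w x : ℝ) : ℂ))
    (fun x => (d0 x).ofReal_comp) (by fun_prop) (by simp [b0])
  have r1 := aux_deriv hab (fun x => ((iteratedDeriv 1 w x : ℝ) : ℂ))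
    (fun x => ((iteratedDeriv 2 w x : ℝ) : ℂ))
    (fun x => (d1 x).ofReal_comp) (by fun_prop) (by simp [b1])
  have r2 := aux_deriv hab (fun x => ((iteratedDeriv 2 w x : ℝ) : ℂ))
    (fun x => ((iteratedDeriv 3 w x : ℝ) : ℂ))
    (fun x => (d2 x).ofReal_comp) (by fun_prop) (by simp [b2])
  have s0 := aux_summable hab _ _ d0 c1 b0
  have s1 := aux_summable hab _ _ d1 c2 b1
  have q1 := aux_parseval hab _ c1
  have q2 := aux_parseval hab _ c2
  have hbaC : ((l - (-l) : ℝ) : ℂ) ≠ 0 := by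
    rw [Complex.ofReal_ne_zero]; exact hba.ne'
  have hstep : ∀ k : ℤ, k ≠ 0 → (2 * Real.pi * Complex.I * k : ℂ) ≠ 0 := by
    intro k hk
    have : (k : ℂ) ≠ 0 := by exact_mod_cast hk
    have hpi : (Real.pi : ℂ) ≠ 0 := by exact_mod_cast Real.pi_ne_zero
    simp [this, hpi]
  -- degenerate case
  have degen : (∀ k : ℤ, k ≠ 0 →
      fourierCoeffOn hab (fun x => ((iteratedDeriv 2 w x : ℝ) : ℂ)) k = 0) →
      (∫ x in (-l)..l, H3 x * w x) = 0 ∧ (∫ x in (-l)..l, H2 x * iteratedDeriv 1 w x) = 0 := by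
    intro hz
    have z1 : ∀ k : ℤ, k ≠ 0 →
        fourierCoeffOn hab (fun x => ((iteratedDeriv 1 w x : ℝ) : ℂ)) k = 0 := by
      intro k hk
      have := r1 k
      rw [hz k hk, mul_zero] at this
      exact (mul_eq_zero.1 this.symm).resolve_left (hstep k hk)
    have z1' : fourierCoeffOn hab (fun x => ((iteratedDeriv 1 w x : ℝ) : ℂ)) 0 = 0 := by
      have := r0 0
      rw [Int.cast_zero, mul_zero, zero_mul] at this
      exact (mul_eq_zero.1 this).resolve_left hbaC
    have z0 : ∀ k : ℤ, k ≠ 0 → fourierCoeffOn hab (fun x => (w x : ℂ)) k = 0 := by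
      intro k hk
      have := r0 k
      rw [z1 k hk, mul_zero] at this
      exact (mul_eq_zero.1 this.symm).resolve_left (hstep k hk)
    have k0 := aux_const hab w c0 b0 z0
    have k1 := aux_const hab _ c1 b1 z1
    have H30 : (∫ x in (-l)..l, H3 x) = 0 := by
      have := hH3 0
      rw [fourierCoeffOn_eq_integral] at this
      simp only [neg_zero, fourier_zero, one_smul, Int.sign_zero, Int.cast_zero, mul_zero,
        zero_mul, intervalIntegral.integral_ofReal] at this
      rcases smul_eq_zero.1 this with h | h
      · exact absurd h (by positivity)
      · exact_mod_cast h
    constructor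
    · have : (∫ x in (-l)..l, H3 x * w x) = ∫ x in (-l)..l, H3 x * w l := by
        rw [intervalIntegral.integral_of_le hab.le, intervalIntegral.integral_of_le hab.le]
        refine MeasureTheory.setIntegral_congr_fun measurableSet_Ioc fun x hx => ?_
        have h1 := k0 x hx
        rw [← k0 l ⟨hab, le_rfl⟩] at h1
        have h2 : w x = w l := by exact_mod_cast h1
        simp only [h2]
      rw [this, intervalIntegral.integral_mul_const, H30, zero_mul]
    · rw [intervalIntegral.integral_of_le hab.le]
      refine MeasureTheory.setIntegral_eq_zero_of_forall_eq_zero fun x hx => ?_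
      have h1 := k1 x hx
      rw [z1'] at h1
      have h2 : iteratedDeriv 1 w x = 0 := by exact_mod_cast h1
      rw [h2, mul_zero]
  have signz : ∀ k : ℤ, k ≠ 0 → (Complex.I * (Int.sign k : ℂ)) ≠ 0 := by
    intro k hk
    have : (Int.sign k : ℂ) ≠ 0 := by
      exact_mod_cast (fun h => hk (Int.sign_eq_zero_iff_zero.1 h))
    exact mul_ne_zero Complex.I_ne_zero this
  have rhs0 : 0 ≤ α ^ 2 * ρ ^ 2 + (1 / 4) * ∫ x in (-l)..l, (iteratedDeriv 2 w x) ^ 2 := by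
    have : 0 ≤ ∫ x in (-l)..l, (iteratedDeriv 2 w x) ^ 2 :=
      intervalIntegral.integral_nonneg hab.le fun x _ => sq_nonneg _
    positivity
  by_cases i2 : IntervalIntegrable (fun x => (H2 x : ℂ)) MeasureTheory.volume (-l) l
  swap
  · obtain ⟨h, h'⟩ := degen fun k hk => by
      have := hH2 k
      rw [aux_nonint hab _ i2] at this
      exact (mul_eq_zero.1 this.symm).resolve_left (signz k hk)
    rw [h, h']
    simpa using rhs0
  by_cases i3 : IntervalIntegrable (fun x => (H3 x : ℂ)) MeasureTheory.volume (-l) l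
  swap
  · obtain ⟨h, h'⟩ := degen fun k hk => by
      have := hH3 k
      rw [aux_nonint hab _ i3] at this
      have h3 := (mul_eq_zero.1 this.symm).resolve_left (signz k hk)
      have := r2 k
      rw [h3, mul_zero] at this
      exact (mul_eq_zero.1 this.symm).resolve_left (hstep k hk)
    rw [h, h']
    simpa using rhs0
  have P3 := aux_pair hab (fun x => (w x : ℂ)) (fun x => (H3 x : ℂ)) (by fun_prop)
    (by simp [b0]) s0 i3
  have P2 := aux_pair hab (fun x => ((iteratedDeriv 1 w x : ℝ) : ℂ)) (fun x => (H2 x : ℂ)) (by fun_prop)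
    (by simp [b1]) s1 i2
  simp only [← Complex.ofReal_mul, intervalIntegral.integral_ofReal] at P3 P2
  constructor
  · have hneg : (∫ x in (-l)..l, H3 x * w x) = -∫ x in (-l)..l, H2 x * iteratedDeriv 1 w x := by
      have := P3.unique (a₂ := -((∫ x in (-l)..l, H2 x * iteratedDeriv 1 w x : ℝ) : ℂ)) (by
        refine aux_congr P2.neg fun k => ?_
        rw [hH3 (-k), hH2 (-k)]
        have h1 := r0 k
        have h2 := r2 (-k)
        rw [← mul_left_inj' hbaC]
        push_cast at h1 h2 ⊢
        linear_combination (fourierCoeffOn hab (fun x => (w x : ℂ)) k *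
          (Complex.I * ((-k).sign : ℂ)) * ((l : ℂ) - -l)) * h2 +
          (Complex.I * ((-k).sign : ℂ)) * ((l : ℂ) - -l) *
            fourierCoeffOn hab (fun x => ((iteratedDeriv 2 w x : ℝ) : ℂ)) (-k) * h1)
      exact_mod_cast this
    rw [hneg]; ring
  · have q2' := (Equiv.neg ℤ).hasSum_iff.2 q2
    have Q := (q1.mul_left (α ^ 2)).add (q2'.mul_left (1 / 4))
    have B := (P2.mul_left (α : ℂ)).norm_le_of_bounded Q (fun k => ?_)
    · rw [← Complex.ofReal_mul, Complex.norm_real, Real.norm_eq_abs] at B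
      have h1 : (∫ x in (-l)..l, (iteratedDeriv 1 w x) ^ 2) ≤ ρ ^ 2 :=
        (Real.sqrt_le_left hρ).1 hw1
      have h2 := neg_le_abs (α * ∫ x in (-l)..l, H2 x * iteratedDeriv 1 w x)
      have h3 := mul_le_mul_of_nonneg_left h1 (sq_nonneg α)
      linarith
    · rw [hH2 (-k)]
      simp only [Function.comp, Equiv.neg_apply, norm_mul, Complex.norm_real, Complex.norm_I,
        Complex.norm_intCast, Real.norm_eq_abs, abs_of_pos hba, abs_of_nonneg hα0]
      set A := ‖fourierCoeffOn hab (fun x => ((iteratedDeriv 1 w x : ℝ) : ℂ)) k‖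
      set C := ‖fourierCoeffOn hab (fun x => ((iteratedDeriv 2 w x : ℝ) : ℂ)) (-k)‖
      have hA : 0 ≤ A := norm_nonneg _
      have hC : 0 ≤ C := norm_nonneg _
      have hs : |(((-k).sign : ℤ) : ℝ)| ≤ 1 := by
        rcases lt_trichotomy (-k) 0 with h | h | h
        · simp [Int.sign_eq_neg_one_of_neg h]
        · simp [h]
        · simp [Int.sign_eq_one_of_pos h]
      have h0 : 0 ≤ α * A * (l - -l) * C := by positivity
      have h1 := mul_le_mul_of_nonneg_left hs h0
      have h2 := mul_nonneg hba.le (sq_nonneg (α * A - C / 2))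
      nlinarith
end

section
/- Let l > 0, 0 ≤ α ≤ 1, and ρ₁, ρ₂ ≥ 0. Let u, v : ℝ × [0, ∞) → ℝ be smooth functions, 2l-periodic in x, such that u solves the nonlocal Kuramoto–Sivashinsky equation u_t + u_{xxxx} + u_{xx} + u u_x + α H(u_{xxx}) = 0 and v solves the Kuramoto–Sivashinsky equation v_t + v_{xxxx} + v_{xx} + v v_x = 0, where H is the periodic Hilbert transform acting in x. Suppose that for all t ≥ 0, ‖u_x(·,t)‖ ≤ ρ₁, ‖v_x(·,t)‖ ≤ ρ₁, ‖u_{xx}(·,t)‖ ≤ ρ₂, ‖v_{xx}(·,t)‖ ≤ ρ₂, and ‖w_x(·,t)‖ ≤ ρ₁ where w := u - v. Then with b₁ := 2 + 4 ρ₁^{1/2} ρ₂^{1/2} and b₂ := 2 ρ₁², for all t ≥ 0: d/dt ‖w(·,t)‖² + ‖w_{xx}(·,t)‖² ≤ b₁ ‖w(·,t)‖² + b₂ α². -/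
open MeasureTheory Set

lemma ks_deriv_integral (l : ℝ) (hl : 0 < l) (F : ℝ → ℝ → ℝ)
    (hF : ContDiff ℝ 1 (Function.uncurry F)) (t : ℝ) :
    deriv (fun s => ∫ x in (-l)..l, F s x) t = ∫ x in (-l)..l, deriv (fun s => F s x) t := by
  have hd : ∀ s x : ℝ, HasDerivAt (fun s => F s x)
      (fderiv ℝ (Function.uncurry F) (s, x) (1, 0)) s := by
    intro s x
    have h1 : HasFDerivAt (Function.uncurry F) (fderiv ℝ (Function.uncurry F) (s, x)) (s, x) :=
      (hF.differentiable (by norm_num) (s, x)).hasFDerivAt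
    have h2 : HasDerivAt (fun s : ℝ => (s, x)) ((1 : ℝ), (0 : ℝ)) s :=
      (hasDerivAt_id s).prodMk (hasDerivAt_const s x)
    exact h1.comp_hasDerivAt s h2
  have hc : Continuous (fun p : ℝ × ℝ => fderiv ℝ (Function.uncurry F) p (1, 0)) :=
    (hF.continuous_fderiv (by norm_num)).clm_apply continuous_const
  have hcF : Continuous (Function.uncurry F) := hF.continuous
  obtain ⟨C, hC⟩ := ((isCompact_Icc (a := t - 1) (b := t + 1)).prod
    (isCompact_Icc (a := -l) (b := l))).exists_bound_of_continuousOn hc.continuousOn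
  have key := intervalIntegral.hasDerivAt_integral_of_dominated_loc_of_deriv_le
    (μ := volume) (a := -l) (b := l) (F := F)
    (F' := fun s x => fderiv ℝ (Function.uncurry F) (s, x) (1, 0)) (x₀ := t)
    (s := Icc (t - 1) (t + 1)) (bound := fun _ => C)
    (Icc_mem_nhds (by linarith) (by linarith))
    (Filter.Eventually.of_forall fun s =>
      (hcF.comp (by fun_prop : Continuous fun x : ℝ => (s, x))).aestronglyMeasurable)
    ((hcF.comp (by fun_prop : Continuous fun x : ℝ => (t, x))).intervalIntegrable _ _)
    (hc.comp (by fun_prop : Continuous fun x : ℝ => (t, x))).aestronglyMeasurable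
    (Filter.Eventually.of_forall fun x hx s hs => hC (s, x) ⟨hs, by
      rw [uIoc_of_le (by linarith)] at hx; exact Ioc_subset_Icc_self hx⟩)
    (by simp)
    (Filter.Eventually.of_forall fun x _ s _ => hd s x)
  rw [key.2.deriv]
  exact intervalIntegral.integral_congr fun x _ => ((hd t x).deriv).symm

lemma ks_cs (l : ℝ) (hl : 0 < l) (f g : ℝ → ℝ) (hf : Continuous f) (hg : Continuous g)
    (a b : ℝ) (ha : 0 ≤ a) (hb : 0 ≤ b)
    (hfa : Real.sqrt (∫ x in (-l)..l, f x ^ 2) ≤ a)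
    (hgb : Real.sqrt (∫ x in (-l)..l, g x ^ 2) ≤ b) :
    ∫ x in (-l)..l, |f x * g x| ≤ a * b := by
  have hll : -l ≤ l := by linarith
  rw [Real.sqrt_le_left ha] at hfa
  rw [Real.sqrt_le_left hb] at hgb
  set A := ∫ x in (-l)..l, f x ^ 2
  set B := ∫ x in (-l)..l, g x ^ 2
  set P := ∫ x in (-l)..l, |f x * g x| with hP
  have hq : ∀ c : ℝ, 0 ≤ B * (c * c) + (-2 * P) * c + A := by
    intro c
    have h0 : 0 ≤ ∫ x in (-l)..l, (|f x| - c * |g x|) ^ 2 :=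
      intervalIntegral.integral_nonneg hll fun x _ => sq_nonneg _
    have h1 : ∫ x in (-l)..l, (|f x| - c * |g x|) ^ 2
        = ∫ x in (-l)..l, ((f x ^ 2 + (-2 * c) * |f x * g x|) + (c * c) * g x ^ 2) := by
      refine intervalIntegral.integral_congr fun x _ => ?_
      simp only [abs_mul]
      rw [← sq_abs (f x), ← sq_abs (g x)]; ring
    rw [h1, intervalIntegral.integral_add, intervalIntegral.integral_add,
      intervalIntegral.integral_const_mul, intervalIntegral.integral_const_mul] at h0
    · linarith
    all_goals exact Continuous.intervalIntegrable (by fun_prop) _ _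
  have hdis := discrim_le_zero hq
  unfold discrim at hdis
  have hP0 : 0 ≤ P := intervalIntegral.integral_nonneg hll fun x _ => abs_nonneg _
  have hA0 : 0 ≤ A := intervalIntegral.integral_nonneg hll fun x _ => sq_nonneg _
  have hB0 : 0 ≤ B := intervalIntegral.integral_nonneg hll fun x _ => sq_nonneg _
  have : P ^ 2 ≤ (a * b) ^ 2 := by
    have : A * B ≤ a ^ 2 * b ^ 2 := mul_le_mul hfa hgb hB0 (by positivity)
    nlinarith
  exact (pow_le_pow_iff_left₀ hP0 (by positivity) (by norm_num)).1 this

lemma ks_sup (l : ℝ) (hl : 0 < l) (U U1 U2 : ℝ → ℝ)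
    (h1 : ∀ x, HasDerivAt U (U1 x) x) (h2 : ∀ x, HasDerivAt U1 (U2 x) x)
    (hc1 : Continuous U1) (hc2 : Continuous U2) (hp : U l = U (-l))
    (a b : ℝ) (ha : 0 ≤ a) (hb : 0 ≤ b)
    (hfa : Real.sqrt (∫ x in (-l)..l, U1 x ^ 2) ≤ a)
    (hgb : Real.sqrt (∫ x in (-l)..l, U2 x ^ 2) ≤ b) (x : ℝ) (hx : x ∈ Icc (-l) l) :
    |U1 x| ≤ 2 * Real.sqrt a * Real.sqrt b := by
  have hll : -l ≤ l := by linarith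
  have hcs := ks_cs l hl U1 U2 hc1 hc2 a b ha hb hfa hgb
  obtain ⟨z, hz, hz0⟩ := exists_hasDerivAt_eq_zero (f := U) (f' := U1) (by linarith : -l < l)
    (fun y _ => (h1 y).continuousAt.continuousWithinAt) hp.symm (fun y _ => h1 y)
  have hcont : Continuous fun y => 2 * (U1 y * U2 y) := by fun_prop
  have hint : ∫ y in z..x, 2 * (U1 y * U2 y) = U1 x ^ 2 := by
    rw [intervalIntegral.integral_eq_sub_of_hasDerivAt (f := fun y => U1 y ^ 2)
      (f' := fun y => 2 * (U1 y * U2 y)) _ (hcont.intervalIntegrable _ _)]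
    · simp [hz0]
    · intro y _
      refine HasDerivAt.congr_deriv ((h2 y).pow 2 : HasDerivAt (fun y => U1 y ^ 2) _ y) ?_
      push_cast; ring
  have hle : U1 x ^ 2 ≤ 2 * (a * b) := by
    rw [← hint]
    refine (Real.le_norm_self _).trans
      (intervalIntegral.norm_integral_le_integral_norm_uIoc.trans ?_)
    simp only [Real.norm_eq_abs]
    have : ∫ y in uIoc z x, |2 * (U1 y * U2 y)| ≤ ∫ y in Ioc (-l) l, |2 * (U1 y * U2 y)| := by
      refine setIntegral_mono_set ?_ (Filter.Eventually.of_forall fun y => abs_nonneg _) ?_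
      · exact (hcont.abs.integrableOn_Icc).mono_set Ioc_subset_Icc_self
      · refine LE.le.eventuallyLE ?_
        rw [← uIoc_of_le hll]
        refine uIoc_subset_uIoc_of_uIcc_subset_uIcc (uIcc_subset_uIcc ?_ ?_)
        · rw [uIcc_of_le hll]; exact Ioo_subset_Icc_self hz
        · rw [uIcc_of_le hll]; exact hx
    refine this.trans ?_
    rw [← intervalIntegral.integral_of_le hll]
    simp only [abs_mul, abs_two, intervalIntegral.integral_const_mul]
    simp only [abs_mul] at hcs
    linarith
  refine abs_le_of_sq_le_sq ?_ (by positivity)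
  have := Real.sq_sqrt ha
  have := Real.sq_sqrt hb
  have hab : 0 ≤ a * b := by positivity
  calc U1 x ^ 2 ≤ 2 * (a * b) := hle
    _ ≤ 4 * (a * b) := by linarith
    _ = 4 * (Real.sqrt a ^ 2 * Real.sqrt b ^ 2) := by rw [Real.sq_sqrt ha, Real.sq_sqrt hb]
    _ = _ := by ring

lemma ks_coeff_deriv (l : ℝ) (hab : -l < l) (f f' : ℝ → ℝ)
    (h : ∀ x, HasDerivAt f (f' x) x) (hc : Continuous f') (hp : f l = f (-l)) (k : ℤ) (hk : k ≠ 0) :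
    fourierCoeffOn hab (fun x => (f' x : ℂ)) k =
      (Complex.I * Real.pi * k / l) * fourierCoeffOn hab (fun x => (f x : ℂ)) k := by
  rw [fourierCoeffOn_of_hasDerivAt hab hk (fun x _ => (h x).ofReal_comp)
    ((Complex.continuous_ofReal.comp hc).intervalIntegrable _ _)]
  have hl : (l : ℂ) ≠ 0 := by
    have : l ≠ 0 := by rintro rfl; simp at hab
    exact_mod_cast this
  have hk' : (k : ℂ) ≠ 0 := by exact_mod_cast hk
  have hpi : (Real.pi : ℂ) ≠ 0 := by exact_mod_cast Real.pi_ne_zero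
  simp only [hp, sub_self, mul_zero, zero_sub]
  push_cast
  field_simp
  ring

lemma ks_coeff_add (l : ℝ) (hab : -l < l) (f g : ℝ → ℝ)
    (hf : Continuous f) (hg : Continuous g) (c : ℝ) (k : ℤ) :
    fourierCoeffOn hab (fun x => ((f x + c * g x : ℝ) : ℂ)) k =
      fourierCoeffOn hab (fun x => (f x : ℂ)) k + c * fourierCoeffOn hab (fun x => (g x : ℂ)) k := by
  rw [← fourierCoeffOn.const_mul]
  simp only [fourierCoeffOn_eq_integral]
  rw [← smul_add, ← intervalIntegral.integral_add]
  · congr 2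
    ext x
    simp only [smul_eq_mul]; push_cast; ring
  all_goals
    refine Continuous.intervalIntegrable ?_ _ _
    refine Continuous.smul ((map_continuous (fourier (-k))).comp (AddCircle.continuous_mk' _)) ?_
    fun_prop

lemma ks_parseval (l : ℝ) (hab : -l < l) (f : ℝ → ℝ) (hf : Continuous f) :
    HasSum (fun k => ‖fourierCoeffOn hab (fun x => (f x : ℂ)) k‖ ^ 2)
      ((l - -l)⁻¹ * ∫ x in (-l)..l, f x ^ 2) := by
  have := hasSum_sq_fourierCoeffOn (f := fun x => (f x : ℂ)) hab (by
    have hc : Continuous fun x => (f x : ℂ) := by fun_prop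
    obtain ⟨C, hC⟩ := (isCompact_Icc (a := -l) (b := l)).exists_bound_of_continuousOn
      hc.continuousOn
    refine MemLp.of_bound hc.aestronglyMeasurable C ?_
    filter_upwards [ae_restrict_mem measurableSet_Ioc] with x hx
    exact hC x (Ioc_subset_Icc_self hx))
  simpa using this

lemma ks_nonlocal (l α : ℝ) (hab : -l < l) (w w1 w2 U1 U2 U3 h : ℝ → ℝ)
    (hα : 0 ≤ α)
    (hw1 : ∀ x, HasDerivAt w (w1 x) x) (hw2 : ∀ x, HasDerivAt w1 (w2 x) x)
    (hU2 : ∀ x, HasDerivAt U1 (U2 x) x) (hU3 : ∀ x, HasDerivAt U2 (U3 x) x)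
    (cw : Continuous w) (cw1 : Continuous w1) (cw2 : Continuous w2)
    (cU1 : Continuous U1) (cU2 : Continuous U2) (cU3 : Continuous U3) (ch : Continuous h)
    (pw : w l = w (-l)) (pw1 : w1 l = w1 (-l)) (pU1 : U1 l = U1 (-l)) (pU2 : U2 l = U2 (-l))
    (hH : ∀ k : ℤ, fourierCoeffOn hab (fun x => (h x : ℂ)) k
      = α * (Complex.I * (Int.sign k : ℂ) * fourierCoeffOn hab (fun x => (U3 x : ℂ)) k)) :
    -2 * ∫ x in (-l)..l, w x * h x ≤
      2 * α ^ 2 * (∫ x in (-l)..l, U1 x ^ 2) + 1 / 2 * ∫ x in (-l)..l, w2 x ^ 2 := by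
  have hl : 0 < l := by linarith
  have s1 := ks_parseval l hab (fun x => w x + (-1) * h x) (by fun_prop)
  have s2 := ks_parseval l hab (fun x => w x + 1 * h x) (by fun_prop)
  have s3 := ks_parseval l hab U1 cU1
  have s4 := ks_parseval l hab w2 cw2
  have key := hasSum_le (fun k => ?_) ((s1.sub s2).mul_left (1 / 2))
    ((s3.mul_left (2 * α ^ 2)).add (s4.mul_left (1 / 2)))
  · have e1 : (∫ x in (-l)..l, (w x + (-1) * h x) ^ 2) - (∫ x in (-l)..l, (w x + 1 * h x) ^ 2)
        = -4 * ∫ x in (-l)..l, w x * h x := by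
      rw [← intervalIntegral.integral_sub, ← intervalIntegral.integral_const_mul]
      · refine intervalIntegral.integral_congr fun x _ => ?_
        ring
      all_goals exact Continuous.intervalIntegrable (by fun_prop) _ _
    have hpos : 0 < (l - -l)⁻¹ := by apply inv_pos.2; linarith
    rw [← mul_sub, e1] at key
    refine le_of_mul_le_mul_left ?_ hpos
    linarith
  · have a1 := ks_coeff_add l hab w h cw ch (-1) k
    have a2 := ks_coeff_add l hab w h cw ch 1 k
    rw [a1, a2]
    have hre : ∀ a b : ℂ, 1 / 2 * (‖a + ((-1 : ℝ) : ℂ) * b‖ ^ 2 - ‖a + ((1 : ℝ) : ℂ) * b‖ ^ 2)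
        ≤ 2 * (‖a‖ * ‖b‖) := by
      intro a b
      have t1 : ‖a‖ - ‖b‖ ≤ ‖a + b‖ := by
        have := norm_sub_norm_le a (-b); simpa using this
      have t3 : ‖b‖ - ‖a‖ ≤ ‖a + b‖ := by
        have := norm_sub_norm_le b (-a); rw [add_comm]; simpa using this
      have t2 : ‖a - b‖ ≤ ‖a‖ + ‖b‖ := norm_sub_le a b
      have t4 : ‖a - b‖ ^ 2 ≤ (‖a‖ + ‖b‖) ^ 2 := pow_le_pow_left₀ (norm_nonneg _) t2 2
      have t5 : (‖a‖ - ‖b‖) ^ 2 ≤ ‖a + b‖ ^ 2 := sq_le_sq' (by linarith) t1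
      have e : a + ((-1 : ℝ) : ℂ) * b = a - b := by push_cast; ring
      have e' : a + ((1 : ℝ) : ℂ) * b = a + b := by push_cast; ring
      rw [e, e']
      nlinarith
    refine (hre _ _).trans ?_
    by_cases hk : k = 0
    · rw [hH k]; subst hk; simp; positivity
    · rw [hH k, ks_coeff_deriv l hab U2 U3 hU3 cU3 pU2 k hk,
        ks_coeff_deriv l hab U1 U2 hU2 cU2 pU1 k hk,
        ks_coeff_deriv l hab w1 w2 hw2 cw2 pw1 k hk,
        ks_coeff_deriv l hab w w1 hw1 cw1 pw k hk]
      have hs : ‖(Int.sign k : ℂ)‖ ≤ 1 := by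
        rcases lt_or_gt_of_ne hk with h | h
        · simp [Int.sign_eq_neg_one_of_neg h]
        · simp [Int.sign_eq_one_of_pos h]
      simp only [norm_mul, Complex.norm_I, one_mul, Complex.norm_real, Real.norm_eq_abs,
        abs_of_nonneg hα]
      have hA := norm_nonneg (fourierCoeffOn hab (fun x => (w x : ℂ)) k)
      have hB := norm_nonneg (fourierCoeffOn hab (fun x => (U1 x : ℂ)) k)
      have hc := norm_nonneg (Complex.I * (Real.pi : ℂ) * k / l)
      simp only [norm_div, norm_mul, Complex.norm_I, one_mul, Complex.norm_real,
        Real.norm_eq_abs] at hc ⊢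
      generalize ‖fourierCoeffOn hab (fun x => (w x : ℂ)) k‖ = A at *
      generalize ‖fourierCoeffOn hab (fun x => (U1 x : ℂ)) k‖ = B at *
      generalize |Real.pi| * ‖(k : ℂ)‖ / |l| = c at *
      generalize ‖(Int.sign k : ℂ)‖ = s at *
      have : 2 * (A * (α * (s * (c * (c * B))))) ≤ 2 * (A * (α * (1 * (c * (c * B))))) := by
        gcongr
      nlinarith [sq_nonneg (2 * α * B - c * (c * A))]

lemma ks_iter_hasDeriv (f : ℝ → ℝ) (hf : ContDiff ℝ (⊤ : ℕ∞) f) (n : ℕ) (x : ℝ) :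
    HasDerivAt (iteratedDeriv n f) (iteratedDeriv (n + 1) f x) x := by
  rw [iteratedDeriv_succ]
  exact (hf.differentiable_iteratedDeriv n (by exact_mod_cast WithTop.coe_lt_top _) x).hasDerivAt

lemma ks_iter_cont (f : ℝ → ℝ) (hf : ContDiff ℝ (⊤ : ℕ∞) f) (n : ℕ) :
    Continuous (iteratedDeriv n f) :=
  continuous_iff_continuousAt.2 fun x => (ks_iter_hasDeriv f hf n x).continuousAt

lemma ks_iter_per (f : ℝ → ℝ) (l : ℝ) (hp : ∀ x, f (x + 2 * l) = f x) (n : ℕ) :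
    iteratedDeriv n f l = iteratedDeriv n f (-l) := by
  have h : ∀ x, iteratedDeriv n f (x + 2 * l) = iteratedDeriv n f x := by
    induction n with
    | zero => simpa using hp
    | succ n ih =>
      intro x
      rw [iteratedDeriv_succ, ← deriv_comp_add_const]
      congr 1
      ext y
      exact ih y
  have := h (-l)
  rw [show -l + 2 * l = l by ring] at this
  exact this

lemma ks_core (l α R ρ : ℝ) (hl : 0 < l) (hα : 0 ≤ α)
    (U V : ℕ → ℝ → ℝ) (h q : ℝ → ℝ)
    (dU : ∀ n x, HasDerivAt (U n) (U (n + 1) x) x)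
    (dV : ∀ n x, HasDerivAt (V n) (V (n + 1) x) x)
    (pU : ∀ n, U n l = U n (-l)) (pV : ∀ n, V n l = V n (-l)) (ch : Continuous h)
    (hH : ∀ k : ℤ, fourierCoeffOn (show -l < l by linarith) (fun x => (h x : ℂ)) k
      = α * (Complex.I * (Int.sign k : ℂ) *
        fourierCoeffOn (show -l < l by linarith) (fun x => (U 3 x : ℂ)) k))
    (hq : ∀ x, q x = -(U 4 x - V 4 x) - (U 2 x - V 2 x) - (U 0 x * U 1 x - V 0 x * V 1 x) - h x)
    (hUR : ∀ x ∈ Icc (-l) l, |U 1 x| ≤ 2 * R) (hVR : ∀ x ∈ Icc (-l) l, |V 1 x| ≤ 2 * R)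
    (hρ : ∫ x in (-l)..l, U 1 x ^ 2 ≤ ρ ^ 2) :
    (∫ x in (-l)..l, 2 * (U 0 x - V 0 x) * q x) + (∫ x in (-l)..l, (U 2 x - V 2 x) ^ 2)
      ≤ (2 + 4 * R) * (∫ x in (-l)..l, (U 0 x - V 0 x) ^ 2) + 2 * ρ ^ 2 * α ^ 2 := by
  have hll : -l ≤ l := by linarith
  have cU : ∀ n, Continuous (U n) := fun n =>
    continuous_iff_continuousAt.2 fun x => (dU n x).continuousAt
  have cV : ∀ n, Continuous (V n) := fun n =>
    continuous_iff_continuousAt.2 fun x => (dV n x).continuousAt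
  have c0 := cU 0
  have c1 := cU 1
  have c2 := cU 2
  have c3 := cU 3
  have c4 := cU 4
  have d0 := cV 0
  have d1 := cV 1
  have d2 := cV 2
  have d3 := cV 3
  have d4 := cV 4
  have nl := ks_nonlocal l α (by linarith) (fun x => U 0 x - V 0 x) (fun x => U 1 x - V 1 x)
    (fun x => U 2 x - V 2 x) (U 1) (U 2) (U 3) h hα (fun x => (dU 0 x).sub (dV 0 x))
    (fun x => (dU 1 x).sub (dV 1 x)) (dU 1) (dU 2) (by fun_prop) (by fun_prop) (by fun_prop)
    c1 c2 c3 ch (by simp only [pU, pV]) (by simp only [pU, pV]) (pU 1) (pU 2) hH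
  set G : ℝ → ℝ := fun x => -2 * ((U 0 x - V 0 x) * (U 3 x - V 3 x)
      - (U 1 x - V 1 x) * (U 2 x - V 2 x))
      - 1 / 2 * ((U 0 x - V 0 x) ^ 2 * (U 0 x + V 0 x)) with hG
  set G' : ℝ → ℝ := fun x => -2 * ((U 0 x - V 0 x) * (U 4 x - V 4 x) - (U 2 x - V 2 x) ^ 2)
      - 1 / 2 * (2 * (U 0 x - V 0 x) * (U 1 x - V 1 x) * (U 0 x + V 0 x)
        + (U 0 x - V 0 x) ^ 2 * (U 1 x + V 1 x)) with hG'
  have cG' : Continuous G' := by fun_prop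
  have dG : ∀ x, HasDerivAt G (G' x) x := by
    intro x
    have w0 := (dU 0 x).sub (dV 0 x)
    have w1 := (dU 1 x).sub (dV 1 x)
    have w2 := (dU 2 x).sub (dV 2 x)
    have w3 := (dU 3 x).sub (dV 3 x)
    have s0 := (dU 0 x).add (dV 0 x)
    have := (((w0.mul w3).sub (w1.mul w2)).const_mul (-2)).sub
      (((w0.pow 2).mul s0).const_mul (1 / 2))
    refine HasDerivAt.congr_deriv (this : HasDerivAt G _ x) ?_
    simp only [hG', Pi.sub_apply, Pi.add_apply, Pi.pow_apply]
    push_cast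
    ring
  have iG : ∫ x in (-l)..l, G' x = 0 := by
    rw [intervalIntegral.integral_eq_sub_of_hasDerivAt (fun x _ => dG x)
      (cG'.intervalIntegrable _ _)]
    simp only [hG, pU, pV, sub_self]
  have qc : Continuous q := by
    have : q = _ := funext hq
    rw [this]; fun_prop
  have key : ∫ x in (-l)..l, ((2 * (U 0 x - V 0 x) * q x + (U 2 x - V 2 x) ^ 2)
        + 2 * ((U 0 x - V 0 x) * h x))
      ≤ ∫ x in (-l)..l, ((G' x + (2 + 4 * R) * (U 0 x - V 0 x) ^ 2)
        + (-1 / 2) * (U 2 x - V 2 x) ^ 2) := by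
    refine intervalIntegral.integral_mono_on hll
      (Continuous.intervalIntegrable (by fun_prop) _ _)
      (Continuous.intervalIntegrable (by fun_prop) _ _) fun x hx => ?_
    have b1 := abs_le.1 (hUR x hx)
    have b2 := abs_le.1 (hVR x hx)
    have hR : 0 ≤ R := by have := abs_nonneg (U 1 x); linarith [hUR x hx]
    have b3 : 0 ≤ (U 0 x - V 0 x) ^ 2 * (4 * R + 1 / 2 * (U 1 x + V 1 x)) :=
      mul_nonneg (sq_nonneg _) (by linarith [b1.1, b2.1])
    simp only [hG', hq x]
    nlinarith [sq_nonneg (2 * (U 0 x - V 0 x) + (U 2 x - V 2 x))]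
  rw [intervalIntegral.integral_add, intervalIntegral.integral_add,
    intervalIntegral.integral_add, intervalIntegral.integral_add, iG,
    intervalIntegral.integral_const_mul, intervalIntegral.integral_const_mul,
    intervalIntegral.integral_const_mul] at key
  · have : 2 * α ^ 2 * (∫ x in (-l)..l, U 1 x ^ 2) ≤ 2 * α ^ 2 * ρ ^ 2 := by gcongr
    linarith
  all_goals exact Continuous.intervalIntegrable (by fun_prop) _ _

/-- **Differential inequality** for the difference `w := u - v` of a solution `u` of the
nonlocal Kuramoto–Sivashinsky equation `u_t + u_{xxxx} + u_{xx} + u u_x + α H(u_{xxx}) = 0`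
and a solution `v` of `v_t + v_{xxxx} + v_{xx} + v v_x = 0`, both `2l`-periodic in `x`,
under the uniform bounds `‖u_x‖, ‖v_x‖, ‖w_x‖ ≤ ρ₁` and `‖u_{xx}‖, ‖v_{xx}‖ ≤ ρ₂`:
with `b₁ := 2 + 4 ρ₁^{1/2} ρ₂^{1/2}` and `b₂ := 2 ρ₁²`, for all `t ≥ 0`,
`d/dt ‖w‖² + ‖w_{xx}‖² ≤ b₁ ‖w‖² + b₂ α²`. -/
theorem nonlocal_ks_differential_inequality
    (l α ρ₁ ρ₂ : ℝ) (hl : 0 < l) (hα0 : 0 ≤ α) (hα1 : α ≤ 1)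
    (hρ₁ : 0 ≤ ρ₁) (hρ₂ : 0 ≤ ρ₂)
    (u v Hu3 : ℝ → ℝ → ℝ)
    (hu : ContDiff ℝ (⊤ : ℕ∞) (Function.uncurry u))
    (hv : ContDiff ℝ (⊤ : ℕ∞) (Function.uncurry v))
    (hup : ∀ t x : ℝ, u t (x + 2 * l) = u t x)
    (hvp : ∀ t x : ℝ, v t (x + 2 * l) = v t x)
    (hHu3p : ∀ t x : ℝ, Hu3 t (x + 2 * l) = Hu3 t x)
    (hHu3 : ∀ t : ℝ, 0 ≤ t → IsPeriodicHilbertPair l hl (iteratedDeriv 3 (u t)) (Hu3 t))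
    (hueq : ∀ t : ℝ, 0 ≤ t → ∀ x : ℝ,
      deriv (fun s => u s x) t + iteratedDeriv 4 (u t) x + iteratedDeriv 2 (u t) x
        + u t x * deriv (u t) x + α * Hu3 t x = 0)
    (hveq : ∀ t : ℝ, 0 ≤ t → ∀ x : ℝ,
      deriv (fun s => v s x) t + iteratedDeriv 4 (v t) x + iteratedDeriv 2 (v t) x
        + v t x * deriv (v t) x = 0)
    (hu1 : ∀ t : ℝ, 0 ≤ t → Real.sqrt (∫ x in (-l)..l, (deriv (u t) x) ^ 2) ≤ ρ₁)
    (hv1 : ∀ t : ℝ, 0 ≤ t → Real.sqrt (∫ x in (-l)..l, (deriv (v t) x) ^ 2) ≤ ρ₁)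
    (hu2 : ∀ t : ℝ, 0 ≤ t → Real.sqrt (∫ x in (-l)..l, (iteratedDeriv 2 (u t) x) ^ 2) ≤ ρ₂)
    (hv2 : ∀ t : ℝ, 0 ≤ t → Real.sqrt (∫ x in (-l)..l, (iteratedDeriv 2 (v t) x) ^ 2) ≤ ρ₂)
    (hw1 : ∀ t : ℝ, 0 ≤ t →
      Real.sqrt (∫ x in (-l)..l, (deriv (fun y => u t y - v t y) x) ^ 2) ≤ ρ₁) :
    ∀ t : ℝ, 0 ≤ t →
      deriv (fun s => ∫ x in (-l)..l, (u s x - v s x) ^ 2) t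
        + (∫ x in (-l)..l, (iteratedDeriv 2 (fun y => u t y - v t y) x) ^ 2)
      ≤ (2 + 4 * Real.sqrt ρ₁ * Real.sqrt ρ₂) * (∫ x in (-l)..l, (u t x - v t x) ^ 2)
        + (2 * ρ₁ ^ 2) * α ^ 2 := by
  intro t ht
  have cu : ∀ s, ContDiff ℝ (⊤ : ℕ∞) (u s) := fun s =>
    hu.comp (contDiff_const.prodMk contDiff_id : ContDiff ℝ _ fun x : ℝ => (s, x))
  have cv : ∀ s, ContDiff ℝ (⊤ : ℕ∞) (v s) := fun s =>
    hv.comp (contDiff_const.prodMk contDiff_id : ContDiff ℝ _ fun x : ℝ => (s, x))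
  have tu : ∀ x, Differentiable ℝ (fun s => u s x) := fun x =>
    (hu.comp (contDiff_id.prodMk contDiff_const : ContDiff ℝ _ fun s : ℝ => (s, x))).differentiable
      (by simp)
  have tv : ∀ x, Differentiable ℝ (fun s => v s x) := fun x =>
    (hv.comp (contDiff_id.prodMk contDiff_const : ContDiff ℝ _ fun s : ℝ => (s, x))).differentiable
      (by simp)
  have hcu : Continuous fun x => deriv (fun s => u s x) t := by
    have : (fun x => deriv (fun s => u s x) t)
        = fun x => fderiv ℝ (Function.uncurry u) (t, x) (1, 0) := by
      ext x
      have h1 : HasFDerivAt (Function.uncurry u) (fderiv ℝ (Function.uncurry u) (t, x)) (t, x) :=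
        (hu.differentiable (by simp) (t, x)).hasFDerivAt
      have h2 : HasDerivAt (fun s : ℝ => (s, x)) ((1 : ℝ), (0 : ℝ)) t :=
        (hasDerivAt_id t).prodMk (hasDerivAt_const t x)
      exact (h1.comp_hasDerivAt t h2).deriv
    rw [this]
    exact ((hu.continuous_fderiv (by simp)).comp (by fun_prop)).clm_apply continuous_const
  have dU := ks_iter_hasDeriv (u t) (cu t)
  have dV := ks_iter_hasDeriv (v t) (cv t)
  have pU := ks_iter_per (u t) l (hup t)
  have pV := ks_iter_per (v t) l (hvp t)
  have cU := ks_iter_cont (u t) (cu t)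
  have cV := ks_iter_cont (v t) (cv t)
  have c0 := cU 0
  have c1 := cU 1
  have c2 := cU 2
  have c4 := cU 4
  have hu1' := hu1 t ht
  have hv1' := hv1 t ht
  have eu := hueq t ht
  have ev := hveq t ht
  simp only [← iteratedDeriv_one (f := u t), ← iteratedDeriv_one (f := v t)] at hu1' hv1' eu ev
  have ch : Continuous fun x => α * Hu3 t x := by
    have : (fun x => α * Hu3 t x) = fun x => -(deriv (fun s => u s x) t + iteratedDeriv 4 (u t) x
        + iteratedDeriv 2 (u t) x + iteratedDeriv 0 (u t) x * iteratedDeriv 1 (u t) x) := by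
      ext x
      simp only [iteratedDeriv_zero]
      linarith [eu x]
    rw [this]
    fun_prop
  have core := ks_core l α (Real.sqrt ρ₁ * Real.sqrt ρ₂) ρ₁ hl hα0
    (fun n => iteratedDeriv n (u t)) (fun n => iteratedDeriv n (v t)) (fun x => α * Hu3 t x)
    (fun x => deriv (fun s => u s x) t - deriv (fun s => v s x) t) dU dV pU pV ch
    (by
      intro k
      rw [← hHu3 t ht k, ← fourierCoeffOn.const_mul]
      simp only [Complex.ofReal_mul])
    (by
      intro x
      simp only [iteratedDeriv_zero]
      linarith [eu x, ev x])
    (fun x hx => by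
      rw [← mul_assoc]
      exact ks_sup l hl _ _ _ (dU 0) (dU 1) (cU 1) (cU 2) (pU 0) ρ₁ ρ₂ hρ₁ hρ₂
        hu1' (hu2 t ht) x hx)
    (fun x hx => by
      rw [← mul_assoc]
      exact ks_sup l hl _ _ _ (dV 0) (dV 1) (cV 1) (cV 2) (pV 0) ρ₁ ρ₂ hρ₁ hρ₂
        hv1' (hv2 t ht) x hx)
    ((Real.sqrt_le_left hρ₁).1 hu1')
  have e1 : deriv (fun s => ∫ x in (-l)..l, (u s x - v s x) ^ 2) t
      = ∫ x in (-l)..l, 2 * (u t x - v t x)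
        * (deriv (fun s => u s x) t - deriv (fun s => v s x) t) := by
    rw [ks_deriv_integral l hl (fun s x => (u s x - v s x) ^ 2)
      (((hu.sub hv).pow 2).of_le (by simp)) t]
    refine intervalIntegral.integral_congr fun x _ => ?_
    have := (((tu x t).hasDerivAt.sub (tv x t).hasDerivAt).pow 2).deriv
    simpa [Pi.pow_def, Pi.sub_def] using this
  have e2 : iteratedDeriv 2 (fun y => u t y - v t y)
      = fun x => iteratedDeriv 2 (u t) x - iteratedDeriv 2 (v t) x := by
    have s1 : deriv (fun y => u t y - v t y)
        = fun x => iteratedDeriv 1 (u t) x - iteratedDeriv 1 (v t) x := by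
      ext x
      have := ((dU 0 x).sub (dV 0 x)).deriv
      simpa [Pi.sub_def] using this
    rw [show (2 : ℕ) = 1 + 1 from rfl, iteratedDeriv_succ, iteratedDeriv_one, s1]
    ext x
    exact ((dU 1 x).sub (dV 1 x)).deriv
  rw [e1, e2]
  simp only [iteratedDeriv_zero] at core
  rw [← mul_assoc] at core
  exact core
end
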